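/- arXiv:2102.04014 — 4 statements merged into one kernel-verified Lean document; each statement's English description precedes it below -/
import Mathlib

section
/- Let n ≥ 1 and let P, Q : Fin n → E be two point clouds of equal size |P| = |Q| = n in a Euclidean space E. Suppose all points of P and Q lie in a convex set of diameter at most K, i.e. ‖u − v‖ ≤ K for all points u, v drawn from the ranges of P and Q. Then d_CD(P, Q) ≤ 2 K · d_EMD(P, Q). -/
open scoped BigOperators

/-- Chamfer discrepancy between two point clouds. -/
noncomputable def dCD {E : Type*} [NormedAddCommGroup E] {n m : ℕ}
    (P : Fin n → E) (Q : Fin m → E) : ℝ :=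
  (1 / (n : ℝ)) * ∑ i, ⨅ j, ‖P i - Q j‖ ^ 2 +
  (1 / (m : ℝ)) * ∑ j, ⨅ i, ‖P i - Q j‖ ^ 2

/-- Earth Mover's distance between two equal-size point clouds. -/
noncomputable def dEMD {E : Type*} [NormedAddCommGroup E] {n : ℕ}
    (P Q : Fin n → E) : ℝ :=
  ⨅ σ : Equiv.Perm (Fin n), ∑ i, ‖P i - Q (σ i)‖

/-- In `dCD` the binder `⨅ j` extends over the `+`; for nonempty clouds the value is nevertheless
the usual Chamfer discrepancy, a sum of two separate averages. -/
theorem dCD_eq_usual {E : Type*} [NormedAddCommGroup E] {n m : ℕ} (hn : 1 ≤ n) (hm : 1 ≤ m)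
    (P : Fin n → E) (Q : Fin m → E) :
    dCD P Q = ((1 / (n : ℝ)) * ∑ i, (⨅ j, ‖P i - Q j‖ ^ 2)) +
      ((1 / (m : ℝ)) * ∑ j, (⨅ i, ‖P i - Q j‖ ^ 2)) := by
  haveI : Nonempty (Fin m) := ⟨⟨0, hm⟩⟩
  have hn0 : (n : ℝ) ≠ 0 := by positivity
  unfold dCD
  generalize ((1 / (m : ℝ)) * ∑ j, (⨅ i, ‖P i - Q j‖ ^ 2)) = C
  have h : ∀ i, (⨅ j, (‖P i - Q j‖ ^ 2 + C)) = (⨅ j, ‖P i - Q j‖ ^ 2) + C := fun i =>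
    (ciInf_add (Set.finite_range _).bddBelow C).symm
  simp only [h, Finset.sum_add_distrib, Finset.sum_const, Finset.card_univ, Fintype.card_fin,
    nsmul_eq_mul]
  field_simp

theorem chamfer_le_two_K_mul_emd
    {E : Type*} [NormedAddCommGroup E] [InnerProductSpace ℝ E]
    {n : ℕ} (hn : 1 ≤ n) (P Q : Fin n → E) (K : ℝ)
    (hK : ∀ u ∈ Set.range P ∪ Set.range Q, ∀ v ∈ Set.range P ∪ Set.range Q,
      ‖u - v‖ ≤ K) :
    dCD P Q ≤ 2 * K * dEMD P Q := by
  haveI : Nonempty (Fin n) := ⟨⟨0, hn⟩⟩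
  have hPQ : ∀ i j, ‖P i - Q j‖ ≤ K := fun i j =>
    hK _ (Or.inl ⟨i, rfl⟩) _ (Or.inr ⟨j, rfl⟩)
  have hsq : ∀ i j, ‖P i - Q j‖ ^ 2 ≤ K * ‖P i - Q j‖ := fun i j => by
    rw [sq]
    exact mul_le_mul_of_nonneg_right (hPQ i j) (norm_nonneg _)
  obtain ⟨σ, hσ⟩ := exists_eq_ciInf_of_finite
    (f := fun σ : Equiv.Perm (Fin n) => ∑ i, ‖P i - Q (σ i)‖)
  have hE : dEMD P Q = ∑ i, ‖P i - Q (σ i)‖ := hσ.symm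
  have h1 : ∑ i, (⨅ j, ‖P i - Q j‖ ^ 2) ≤ K * dEMD P Q := by
    rw [hE, Finset.mul_sum]
    exact Finset.sum_le_sum fun i _ =>
      (ciInf_le (Set.finite_range _).bddBelow (σ i)).trans (hsq i (σ i))
  have h2 : ∑ j, (⨅ i, ‖P i - Q j‖ ^ 2) ≤ K * dEMD P Q := by
    rw [hE, Finset.mul_sum, ← Equiv.sum_comp σ]
    exact Finset.sum_le_sum fun i _ =>
      (ciInf_le (Set.finite_range fun k => ‖P k - Q (σ i)‖ ^ 2).bddBelow i).trans (hsq i (σ i))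
  have hn1 : 1 / (n : ℝ) ≤ 1 := by
    have : (1 : ℝ) ≤ n := by exact_mod_cast hn
    exact (div_le_one (by positivity)).2 this
  have avg : ∀ S : ℝ, 0 ≤ S → 1 / (n : ℝ) * S ≤ S := fun S hS => mul_le_of_le_one_left hS hn1
  rw [dCD_eq_usual hn hn]
  have a1 := avg _ (Finset.sum_nonneg fun i _ =>
    Real.iInf_nonneg fun j => sq_nonneg ‖P i - Q j‖ : 0 ≤ ∑ i, (⨅ j, ‖P i - Q j‖ ^ 2))
  have a2 := avg _ (Finset.sum_nonneg fun j _ =>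
    Real.iInf_nonneg fun i => sq_nonneg ‖P i - Q j‖ : 0 ≤ ∑ j, (⨅ i, ‖P i - Q j‖ ^ 2))
  linarith
end

section
/- Let n ≥ 1 and let P, Q : Fin n → E be two point clouds of equal size n in a Euclidean space E such that ‖u − v‖ ≤ K for all points u, v drawn from the ranges of P and Q. Then the sharper bound d_CD(P, Q) ≤ (2K/n) · d_EMD(P, Q) holds (this is what the proof of Lemma 1 of the paper actually yields before discarding the factor 1/n). -/
open scoped BigOperators

theorem chamfer_le_two_K_div_n_mul_emd
    {E : Type*} [NormedAddCommGroup E] [InnerProductSpace ℝ E]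
    {n : ℕ} (hn : 1 ≤ n) (P Q : Fin n → E) (K : ℝ)
    (hK : ∀ u ∈ Set.range P ∪ Set.range Q, ∀ v ∈ Set.range P ∪ Set.range Q,
      ‖u - v‖ ≤ K) :
    dCD P Q ≤ 2 * K / (n : ℝ) * dEMD P Q := by
  have hn0 : (0 : ℝ) < n := by exact_mod_cast hn
  obtain ⟨σ, hσ⟩ := exists_eq_ciInf_of_finite
    (f := fun σ : Equiv.Perm (Fin n) => ∑ i, ‖P i - Q (σ i)‖)
  have hE : dEMD P Q = ∑ i, ‖P i - Q (σ i)‖ := hσ.symm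
  have hb : ∀ i j, ‖P i - Q j‖ ^ 2 ≤ K * ‖P i - Q j‖ := by
    intro i j
    rw [sq]
    exact mul_le_mul_of_nonneg_right
      (hK _ (Or.inl ⟨i, rfl⟩) _ (Or.inr ⟨j, rfl⟩)) (norm_nonneg _)
  have h1 : ∑ i, (⨅ j, ‖P i - Q j‖ ^ 2) ≤ K * dEMD P Q := by
    rw [hE, Finset.mul_sum]
    exact Finset.sum_le_sum fun i _ =>
      (ciInf_le (Set.finite_range _).bddBelow (σ i)).trans (hb i (σ i))
  have h2 : ∑ j, (⨅ i, ‖P i - Q j‖ ^ 2) ≤ K * dEMD P Q := by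
    rw [hE, Finset.mul_sum, ← Equiv.sum_comp σ]
    exact Finset.sum_le_sum fun i _ =>
      (ciInf_le (Set.finite_range _).bddBelow i).trans (hb i (σ i))
  have hD : dCD P Q = (1 / (n : ℝ)) * (∑ i, (⨅ j, ‖P i - Q j‖ ^ 2)) +
      (1 / (n : ℝ)) * (∑ j, (⨅ i, ‖P i - Q j‖ ^ 2)) := by
    unfold dCD
    have : Nonempty (Fin n) := ⟨⟨0, hn⟩⟩
    have key : ∀ (f : Fin n → ℝ) (c : ℝ), (⨅ j, (f j + c)) = (⨅ j, f j) + c :=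
      fun f c => (ciInf_add (Set.finite_range f).bddBelow c).symm
    simp only [key, Finset.sum_add_distrib, Finset.sum_const, Finset.card_univ,
      Fintype.card_fin, nsmul_eq_mul]
    field_simp
  rw [hD, ← mul_add, one_div_mul_eq_div, div_mul_eq_mul_div]
  gcongr
  linarith
end

section
/- The reverse of the inequality d_CD ≤ 2K·d_EMD fails, and the Chamfer discrepancy does not separate distinct point clouds: for any two distinct points a ≠ b in a Euclidean space E, the size-3 point clouds P = (a, a, b) and Q = (a, b, b) satisfy d_CD(P, Q) = 0 while d_EMD(P, Q) ≥ ‖a − b‖ > 0. Consequently there is no constant c ≥ 0 with d_EMD(P, Q) ≤ c · d_CD(P, Q) for all equal-size point clouds P, Q. -/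
open scoped BigOperators

theorem chamfer_does_not_dominate_emd
    {E : Type*} [NormedAddCommGroup E] [InnerProductSpace ℝ E]
    (a b : E) (hab : a ≠ b) :
    dCD ![a, a, b] ![a, b, b] = 0 ∧
    ‖a - b‖ ≤ dEMD ![a, a, b] ![a, b, b] ∧
    0 < ‖a - b‖ ∧
    ¬ ∃ c : ℝ, 0 ≤ c ∧ ∀ (n : ℕ) (P Q : Fin n → E), dEMD P Q ≤ c * dCD P Q := by
  have iz : ∀ f : Fin 3 → ℝ, (∀ j, 0 ≤ f j) → (∃ j, f j = 0) → ⨅ j, f j = 0 := by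
    intro f hf ⟨j, hj⟩
    apply le_antisymm
    · rw [← hj]
      exact ciInf_le (Set.finite_range f).bddBelow j
    · exact le_ciInf hf
  have h1 : dCD ![a, a, b] ![a, b, b] = 0 := by
    unfold dCD
    have e1 : ∀ i : Fin 3, ⨅ j : Fin 3, ‖(![a, a, b] : Fin 3 → E) i - (![a, b, b] : Fin 3 → E) j‖ ^ 2 = 0 := by
      intro i
      apply iz _ (fun j => by positivity)
      fin_cases i
      · exact ⟨0, by simp⟩
      · exact ⟨0, by simp⟩
      · exact ⟨1, by simp⟩
    have e2 : ∀ j : Fin 3, ⨅ i : Fin 3, ‖(![a, a, b] : Fin 3 → E) i - (![a, b, b] : Fin 3 → E) j‖ ^ 2 = 0 := by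
      intro j
      apply iz _ (fun i => by positivity)
      fin_cases j
      · exact ⟨0, by simp⟩
      · exact ⟨2, by simp⟩
      · exact ⟨2, by simp⟩
    have e3 : ∑ j : Fin 3, ⨅ i : Fin 3,
        ‖(![a, a, b] : Fin 3 → E) i - (![a, b, b] : Fin 3 → E) j‖ ^ 2 = 0 :=
      Finset.sum_eq_zero (fun j _ => e2 j)
    -- the first infimum in `dCD` scopes over the second summand, which vanishes here
    simp only [Nat.succ_eq_add_one, Nat.reduceAdd, zero_add] at e1 e3 ⊢
    rw [e3]
    simp only [mul_zero, add_zero]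
    rw [Finset.sum_eq_zero (fun i _ => e1 i), mul_zero]
  have h2 : ‖a - b‖ ≤ dEMD ![a, a, b] ![a, b, b] := by
    unfold dEMD
    apply le_ciInf
    intro σ
    refine le_trans (le_of_eq ?_) (norm_sum_le _ _)
    rw [Finset.sum_sub_distrib, Equiv.sum_comp σ (![a, b, b] : Fin 3 → E)]
    congr 1
    simp [Fin.sum_univ_three]
  have h3 : 0 < ‖a - b‖ := norm_pos_iff.mpr (sub_ne_zero.mpr hab)
  refine ⟨h1, h2, h3, ?_⟩
  rintro ⟨c, _, h⟩
  have h4 := h 3 ![a, a, b] ![a, b, b]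
  rw [h1, mul_zero] at h4
  linarith
end

section
/- Corollary of Lemma 1 for the max-form Chamfer discrepancy: let P, Q : Fin n → E be equal-size point clouds in a Euclidean space E with ‖u − v‖ ≤ K for all points u, v drawn from the ranges of P and Q. Then d_MCD(P, Q) ≤ 2 K · d_EMD(P, Q). -/
open scoped BigOperators

/-- Chamfer discrepancy (max form) between two equal-size point clouds. -/
noncomputable def dMCD {E : Type*} [NormedAddCommGroup E] {n : ℕ}
    (P Q : Fin n → E) : ℝ :=
  max ((1 / (n : ℝ)) * ∑ i, ⨅ j, ‖P i - Q j‖ ^ 2)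
      ((1 / (n : ℝ)) * ∑ j, ⨅ i, ‖P i - Q j‖ ^ 2)

/-- Corollary of Lemma 1 for the max-form Chamfer discrepancy. -/
theorem mcd_le_two_K_mul_emd
    {E : Type*} [NormedAddCommGroup E] [InnerProductSpace ℝ E]
    {n : ℕ} (hn : 1 ≤ n) (P Q : Fin n → E) (K : ℝ)
    (hK : ∀ u ∈ Set.range P ∪ Set.range Q, ∀ v ∈ Set.range P ∪ Set.range Q,
      ‖u - v‖ ≤ K) :
    dMCD P Q ≤ 2 * K * dEMD P Q := by
  have hK0 : 0 ≤ K := by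
    have h := hK (P ⟨0, hn⟩) (Or.inl ⟨_, rfl⟩) (P ⟨0, hn⟩) (Or.inl ⟨_, rfl⟩)
    simpa using h
  have hPQ : ∀ i j, ‖P i - Q j‖ ≤ K := fun i j =>
    hK _ (Or.inl ⟨i, rfl⟩) _ (Or.inr ⟨j, rfl⟩)
  obtain ⟨σ, hσ⟩ := exists_eq_ciInf_of_finite
    (f := fun σ : Equiv.Perm (Fin n) => ∑ i, ‖P i - Q (σ i)‖)
  have hE : dEMD P Q = ∑ i, ‖P i - Q (σ i)‖ := hσ.symm
  have hS : 0 ≤ ∑ i, ‖P i - Q (σ i)‖ := Finset.sum_nonneg fun _ _ => norm_nonneg _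
  have hsq : ∀ i j, ‖P i - Q j‖ ^ 2 ≤ K * ‖P i - Q j‖ := fun i j => by
    rw [sq]
    exact mul_le_mul_of_nonneg_right (hPQ i j) (norm_nonneg _)
  have h1 : ∑ i, ⨅ j, ‖P i - Q j‖ ^ 2 ≤ K * ∑ i, ‖P i - Q (σ i)‖ := by
    rw [Finset.mul_sum]
    exact Finset.sum_le_sum fun i _ =>
      (ciInf_le (Set.finite_range _).bddBelow (σ i)).trans (hsq i (σ i))
  have h2 : ∑ j, ⨅ i, ‖P i - Q j‖ ^ 2 ≤ K * ∑ i, ‖P i - Q (σ i)‖ := by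
    rw [Finset.mul_sum, ← Equiv.sum_comp σ]
    exact Finset.sum_le_sum fun i _ =>
      (ciInf_le (Set.finite_range _).bddBelow i).trans (hsq i (σ i))
  have hn1 : 1 / (n : ℝ) ≤ 1 := by
    have : (1 : ℝ) ≤ n := by exact_mod_cast hn
    rw [div_le_one (by linarith)]
    exact this
  have hn0 : 0 ≤ 1 / (n : ℝ) := by positivity
  have hKS := mul_nonneg hK0 hS
  have key : ∀ x : ℝ, x ≤ K * ∑ i, ‖P i - Q (σ i)‖ →
      1 / (n : ℝ) * x ≤ 2 * K * ∑ i, ‖P i - Q (σ i)‖ := fun x hx => by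
    have a := mul_le_mul_of_nonneg_left hx hn0
    have b := mul_le_mul_of_nonneg_right hn1 hKS
    linarith
  rw [hE]
  exact max_le (key _ h1) (key _ h2)
end
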